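/- arXiv:2507.09533 — 2 statements merged into one kernel-verified Lean document; each statement's English description precedes it below -/
import Mathlib

section
/- Let p ≥ 2. There exists a constant C = C(p) > 0 such that for all a, b ∈ ℝ and all γ > 0, |a^{1+γ} − b^{1+γ}|^p ≤ C (1+pγ)^{p−1} (a−b)^{p−1} (a^{1+pγ} − b^{1+pγ}), where for t ∈ ℝ and r > 0, t^r denotes the signed power t|t|^{r−1} (so in particular (a−b)^{p−1} = (a−b)|a−b|^{p−2}). -/
/-!
The constant `C = 1` works. Since `t ↦ t^r` has derivative `r |t|^(r-1)`, for `b < a` the mean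
`m` of `|t|^γ` over `[b, a]` is `(a^{1+γ} - b^{1+γ}) / ((1+γ)(a-b))`, and Jensen's inequality for
`s ↦ s^p` gives `m^p (a-b) ≤ (a^{1+pγ} - b^{1+pγ}) / (1+pγ)`. The claim follows from
`(1+γ)^p ≤ (1+pγ)^p`.

Jensen's inequality is obtained without integrals: by Bernoulli's inequality `s^p` lies above its
tangent at `m` (`tangent_le_rpow`), so the antiderivative of
`|t|^{pγ} - m^p - p m^{p-1} (|t|^γ - m)` is monotone, and the choice of `m` makes the increment of
the linear part vanish (`jensen_sgnPow`).
-/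

/-- The signed power `t^r := t * |t|^(r-1)`. -/
noncomputable def sgnPow (t r : ℝ) : ℝ := t * |t| ^ (r - 1)

theorem hasDerivAt_sgnPow {r : ℝ} (hr : 1 < r) (x : ℝ) :
    HasDerivAt (fun t => sgnPow t r) (r * |x| ^ (r - 1)) x := by
  unfold sgnPow
  rcases eq_or_ne x 0 with rfl | hx
  · -- At the origin the slope is `|t|^(r-1)`, which is continuous and vanishes at `0`.
    have h0 : (0 : ℝ) ^ (r - 1) = 0 := Real.zero_rpow (by linarith)
    rw [hasDerivAt_iff_tendsto_slope]
    have hc : Continuous fun t : ℝ => |t| ^ (r - 1) :=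
      continuous_abs.rpow_const fun _ => Or.inr (by linarith)
    have ht := (hc.tendsto 0).mono_left (nhdsWithin_le_nhds (s := {(0 : ℝ)}ᶜ))
    simp only [abs_zero, h0, mul_zero] at ht ⊢
    refine ht.congr' ?_
    filter_upwards [self_mem_nhdsWithin] with t ht
    have ht' : t ≠ 0 := ht
    simp [slope_def_field, ht']
  · have h1 := ((hasDerivAt_abs hx).rpow_const (p := r - 1) (Or.inl (abs_ne_zero.mpr hx)))
    have h2 := (hasDerivAt_id x).mul h1
    refine h2.congr_deriv ?_
    have e : |x| ^ (r - 1) = |x| ^ (r - 1 - 1) * |x| := by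
      rw [← Real.rpow_add_one (abs_ne_zero.mpr hx)]; ring_nf
    have hs : x * (SignType.sign x : ℝ) = |x| := by
      simp
    simp only [id]
    rw [e, ← hs]
    ring

/-- The convex function `s ↦ s^p` lies above its tangent at `m`. -/
theorem tangent_le_rpow {p s m : ℝ} (hp : 2 ≤ p) (hs : 0 ≤ s) (hm : 0 ≤ m) :
    m ^ p + p * m ^ (p - 1) * (s - m) ≤ s ^ p := by
  rcases hm.eq_or_lt with rfl | hm
  · rw [Real.zero_rpow (by linarith), Real.zero_rpow (by linarith)]
    have := Real.rpow_nonneg hs p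
    linarith
  · have hsm : 0 ≤ s / m := div_nonneg hs hm.le
    have h := one_add_mul_self_le_rpow_one_add (s := s / m - 1) (p := p)
      (by linarith) (by linarith)
    have e1 : 1 + (s / m - 1) = s / m := by ring
    rw [e1, Real.div_rpow hs hm.le] at h
    have hmp : 0 < m ^ p := Real.rpow_pos_of_pos hm p
    have e2 : m ^ p = m ^ (p - 1) * m := by
      rw [← Real.rpow_add_one hm.ne']; ring_nf
    rw [le_div_iff₀ hmp] at h
    calc m ^ p + p * m ^ (p - 1) * (s - m) = (1 + p * (s / m - 1)) * m ^ p := by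
          rw [e2]; field_simp
      _ ≤ s ^ p := h

theorem monotone_sgnPow {r : ℝ} (hr : 1 < r) : Monotone fun t => sgnPow t r := by
  refine monotone_of_hasDerivAt_nonneg (fun x => hasDerivAt_sgnPow hr x) fun x => ?_
  have := Real.rpow_nonneg (abs_nonneg x) (r - 1)
  have : 0 ≤ r := by linarith
  simp only [Pi.zero_apply]
  positivity

/-- Jensen's inequality for `s ↦ s^p` and the mean `m` of `|t|^γ` over `[b, a]`, with the integrals
written out through their antiderivatives. -/
theorem jensen_sgnPow {p a b γ m : ℝ} (hp : 2 ≤ p) (hab : b ≤ a) (hγ : 0 < γ) (hm0 : 0 ≤ m)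
    (hm : sgnPow a (1 + γ) - sgnPow b (1 + γ) = (1 + γ) * m * (a - b)) :
    (1 + p * γ) * (m ^ p * (a - b)) ≤ sgnPow a (1 + p * γ) - sgnPow b (1 + p * γ) := by
  have hpγ : 0 < p * γ := by positivity
  have hder : ∀ t : ℝ, HasDerivAt
      (fun t => sgnPow t (1 + p * γ) / (1 + p * γ) - m ^ p * t
        - p * m ^ (p - 1) * (sgnPow t (1 + γ) / (1 + γ) - m * t))
      ((1 + p * γ) * |t| ^ (1 + p * γ - 1) / (1 + p * γ) - m ^ p * 1
        - p * m ^ (p - 1) * ((1 + γ) * |t| ^ (1 + γ - 1) / (1 + γ) - m * 1)) t := fun t =>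
    (((hasDerivAt_sgnPow (by linarith) t).div_const _).sub ((hasDerivAt_id t).const_mul _)).sub
      ((((hasDerivAt_sgnPow (by linarith) t).div_const _).sub
        ((hasDerivAt_id t).const_mul _)).const_mul _)
  have hmono := monotone_of_hasDerivAt_nonneg hder fun t => by
    have h := tangent_le_rpow hp (Real.rpow_nonneg (abs_nonneg t) γ) hm0
    rw [← Real.rpow_mul (abs_nonneg t), mul_comm γ p] at h
    rw [mul_div_cancel_left₀ _ (by linarith : 1 + p * γ ≠ 0),
      mul_div_cancel_left₀ _ (by linarith : 1 + γ ≠ 0), add_sub_cancel_left, add_sub_cancel_left]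
    simp only [Pi.zero_apply]
    linarith
  have h := hmono hab
  simp only at h
  -- The increment of the linear part of the tangent is zero by the choice of `m`.
  have hz : sgnPow a (1 + γ) / (1 + γ) - m * a = sgnPow b (1 + γ) / (1 + γ) - m * b := by
    have h1 : 1 + γ ≠ 0 := by linarith
    field_simp
    linarith
  rw [hz] at h
  have h2 : m ^ p * (a - b) ≤
      (sgnPow a (1 + p * γ) - sgnPow b (1 + p * γ)) / (1 + p * γ) := by
    rw [sub_div]; linarith
  rw [le_div_iff₀ (by linarith)] at h2
  linarith

theorem stmt7_of_lt {p a b γ : ℝ} (hp : 2 ≤ p) (hab : b < a) (hγ : 0 < γ) :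
    |sgnPow a (1 + γ) - sgnPow b (1 + γ)| ^ p ≤
      (1 + p * γ) ^ (p - 1) * sgnPow (a - b) (p - 1) *
        (sgnPow a (1 + p * γ) - sgnPow b (1 + p * γ)) := by
  have hd : 0 < a - b := sub_pos.mpr hab
  have hpγ : 0 < 1 + p * γ := by positivity
  have hD : 0 ≤ sgnPow a (1 + γ) - sgnPow b (1 + γ) :=
    sub_nonneg.mpr (monotone_sgnPow (by linarith) hab.le)
  obtain ⟨m, hm⟩ : ∃ m, m = (sgnPow a (1 + γ) - sgnPow b (1 + γ)) / ((1 + γ) * (a - b)) :=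
    ⟨_, rfl⟩
  have hm0 : 0 ≤ m := by rw [hm]; positivity
  have hmD : sgnPow a (1 + γ) - sgnPow b (1 + γ) = (1 + γ) * m * (a - b) := by
    rw [hm]; field_simp
  have hJ := jensen_sgnPow hp hab.le hγ hm0 hmD
  have hsg : sgnPow (a - b) (p - 1) = (a - b) ^ (p - 1) := by
    unfold sgnPow
    rw [abs_of_pos hd, mul_comm, ← Real.rpow_add_one hd.ne']
    ring_nf
  have split : ∀ x : ℝ, 0 < x → x ^ p = x ^ (p - 1) * x := fun x hx => by
    rw [← Real.rpow_add_one hx.ne']; ring_nf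
  have hle : 1 + γ ≤ 1 + p * γ := by nlinarith
  rw [abs_of_nonneg hD, hmD, hsg]
  calc ((1 + γ) * m * (a - b)) ^ p ≤ ((1 + p * γ) * m * (a - b)) ^ p := by gcongr
    _ = (1 + p * γ) ^ (p - 1) * (a - b) ^ (p - 1) * ((1 + p * γ) * (m ^ p * (a - b))) := by
        rw [Real.mul_rpow (by positivity) hd.le, Real.mul_rpow hpγ.le hm0, split _ hpγ,
          split _ hd]
        ring
    _ ≤ _ := by gcongr

/-- Lemma 2.1 (elementary inequality for signed powers). -/
theorem stmt7 (p : ℝ) (hp : 2 ≤ p) :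
    ∃ C : ℝ, 0 < C ∧ ∀ a b γ : ℝ, 0 < γ →
      |sgnPow a (1 + γ) - sgnPow b (1 + γ)| ^ p ≤
        C * (1 + p * γ) ^ (p - 1) * sgnPow (a - b) (p - 1) *
          (sgnPow a (1 + p * γ) - sgnPow b (1 + p * γ)) := by
  refine ⟨1, one_pos, fun a b γ hγ => ?_⟩
  rw [one_mul]
  rcases lt_trichotomy a b with h | rfl | h
  · -- Both factors on the right change sign when `a` and `b` are exchanged.
    have h1 := stmt7_of_lt hp h hγ
    have h2 : sgnPow (b - a) (p - 1) = -sgnPow (a - b) (p - 1) := by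
      unfold sgnPow
      rw [abs_sub_comm b a]; ring
    rw [abs_sub_comm, h2] at h1
    linarith
  · simp [Real.zero_rpow (by linarith : p ≠ 0)]
  · exact stmt7_of_lt hp h hγ
end

section
/- Let N ≥ 1, s ∈ (0,1), 2 ≤ p < N/s, and let a : ℝ^N → ℝ be measurable with |a(x)| ≤ c_a/(1+|x|^{N+α}) for all x, for some α > 0 and c_a ≥ 0. Define the measure μ(E) = ∫_E |a(y)| dy and the nonlinear Wolff potential W^μ_{s,p}(x;∞) = ∫_0^∞ (μ(B(x,t)) / t^{N−sp})^{1/(p−1)} dt/t. Then there exists a constant C > 0, depending only on N, p, s and the data of a, such that W^μ_{s,p}(x;∞) ≤ C |x|^{−(N−sp)/(p−1)} for all x ≠ 0. -/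
open MeasureTheory ENNReal

/-!
Write `r = ‖x‖`, `d = N - s * p > 0` and `μ(E) = ∫_E |a|`. The measure `μ` is finite, so
`μ(B(x,t)) ≤ M` for all `t`. If moreover `t ≤ r / 2`, then every `y ∈ B(x,t)` has `‖y‖ ≥ r / 2`,
where `|a y| ≤ cₐ (r / 2)^(-N)`, and hence `μ(B(x,t)) ≤ M (t / r)^N` after enlarging `M`. These two
bounds are `exists_mass_bound`. Splitting the potential at `t = r / 2`, the inner part is at most a
multiple of `r^(-N/(p-1)) ∫_0^{r/2} t^(sp/(p-1) - 1) dt` and the outer part at most a multiple of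
`∫_{r/2}^∞ t^(-d/(p-1) - 1) dt`; both are multiples of `r^(-d/(p-1))`.
-/

lemma integrable_inv_one_add_norm_rpow (N : ℕ) {α : ℝ} (hα : 0 < α) :
    Integrable (fun x : EuclideanSpace ℝ (Fin N) => 1 / (1 + ‖x‖ ^ ((N : ℝ) + α))) := by
  have hβ : 0 < (N : ℝ) + α := by positivity
  have h1 : Integrable (fun x : EuclideanSpace ℝ (Fin N) =>
      (2 : ℝ) ^ ((N : ℝ) + α) * (1 + ‖x‖) ^ (-((N : ℝ) + α))) := by
    refine (integrable_one_add_norm ?_).const_mul _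
    simp [hα]
  refine h1.mono' (Measurable.aestronglyMeasurable (by fun_prop)) (Filter.Eventually.of_forall fun x => ?_)
  have hx := norm_nonneg x
  rw [Real.norm_of_nonneg (by positivity), Real.rpow_neg (by positivity), ← div_eq_mul_inv,
    div_le_div_iff₀ (by positivity) (by positivity), one_mul]
  -- `1 + ‖x‖ ≤ 2 * max 1 ‖x‖`
  rcases le_total ‖x‖ 1 with h | h
  · calc (1 + ‖x‖) ^ ((N : ℝ) + α) ≤ 2 ^ ((N : ℝ) + α) := by gcongr; linarith
      _ ≤ _ := le_mul_of_one_le_right (by positivity) (by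
        have : 0 ≤ ‖x‖ ^ ((N : ℝ) + α) := by positivity
        linarith)
  · calc (1 + ‖x‖) ^ ((N : ℝ) + α) ≤ (2 * ‖x‖) ^ ((N : ℝ) + α) := by gcongr; linarith
      _ = 2 ^ ((N : ℝ) + α) * ‖x‖ ^ ((N : ℝ) + α) := Real.mul_rpow (by norm_num) hx
      _ ≤ _ := by gcongr; linarith

/-- The mass of a ball centred at `x` is bounded, and it is bounded by a multiple of
`(t / ‖x‖) ^ N` as long as the ball stays away from the origin. -/
lemma exists_mass_bound (N : ℕ) (a : EuclideanSpace ℝ (Fin N) → ℝ) (hma : Measurable a)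
    (α cₐ : ℝ) (hα : 0 < α) (hca : 0 ≤ cₐ)
    (hHa : ∀ x, |a x| ≤ cₐ / (1 + ‖x‖ ^ ((N : ℝ) + α))) :
    ∃ M : ℝ, 0 < M ∧ ∀ x : EuclideanSpace ℝ (Fin N), x ≠ 0 → ∀ t : ℝ, 0 < t →
      (∫ y in Metric.ball x t, |a y|) ≤ M ∧
      (t ≤ ‖x‖ / 2 → (∫ y in Metric.ball x t, |a y|) ≤ M * (t / ‖x‖) ^ (N : ℝ)) := by
  have hint : Integrable (fun y => |a y|) := by
    refine ((integrable_inv_one_add_norm_rpow N hα).const_mul cₐ).mono'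
      (by fun_prop) (Filter.Eventually.of_forall fun x => ?_)
    rw [Real.norm_of_nonneg (abs_nonneg _), mul_one_div]
    exact hHa x
  set I := ∫ y, |a y|
  have hI : 0 ≤ I := integral_nonneg fun _ => abs_nonneg _
  set ω := volume.real (Metric.ball (0 : EuclideanSpace ℝ (Fin N)) 1)
  have hω : 0 ≤ ω := measureReal_nonneg
  have hK : 0 ≤ cₐ * 2 ^ (N : ℝ) * ω := by positivity
  refine ⟨I + cₐ * 2 ^ (N : ℝ) * ω + 1, by linarith, fun x hx t ht => ⟨?_, fun htr => ?_⟩⟩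
  · have := setIntegral_le_integral (s := Metric.ball x t) hint
      (Filter.Eventually.of_forall fun _ => abs_nonneg _)
    linarith
  · have hr : 0 < ‖x‖ := norm_pos_iff.2 hx
    have hpt : ∀ y ∈ Metric.ball x t, ‖|a y|‖ ≤ cₐ / (‖x‖ / 2) ^ (N : ℝ) := by
      intro y hy
      have hy' : ‖x‖ / 2 ≤ ‖y‖ := by
        have h1 : ‖x - y‖ < t := by rw [← dist_eq_norm, dist_comm]; exact hy
        have h2 := norm_sub_norm_le x y
        linarith
      rw [Real.norm_of_nonneg (abs_nonneg _)]
      refine (hHa y).trans ?_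
      gcongr
      have hy0 : 0 < ‖y‖ := by linarith
      calc (‖x‖ / 2) ^ (N : ℝ) ≤ ‖y‖ ^ (N : ℝ) := by gcongr
        _ ≤ 1 + ‖y‖ ^ ((N : ℝ) + α) := by
          rcases le_total ‖y‖ 1 with h | h
          · have h1 : ‖y‖ ^ (N : ℝ) ≤ 1 := Real.rpow_le_one hy0.le h (by positivity)
            have h2 : 0 ≤ ‖y‖ ^ ((N : ℝ) + α) := by positivity
            linarith
          · have := Real.rpow_le_rpow_of_exponent_le h (show (N : ℝ) ≤ (N : ℝ) + α by linarith)
            linarith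
    have hvol : volume.real (Metric.ball x t) = t ^ (N : ℝ) * ω := by
      simp only [Measure.real, ω]
      rw [Measure.addHaar_ball_of_pos volume x ht, ENNReal.toReal_mul,
        ENNReal.toReal_ofReal (by positivity)]
      simp
    have h1 := norm_setIntegral_le_of_norm_le_const (μ := volume) measure_ball_lt_top hpt
    rw [hvol] at h1
    calc (∫ y in Metric.ball x t, |a y|) ≤ cₐ / (‖x‖ / 2) ^ (N : ℝ) * (t ^ (N : ℝ) * ω) :=
          (Real.le_norm_self _).trans h1
      _ = (cₐ * 2 ^ (N : ℝ) * ω) * (t / ‖x‖) ^ (N : ℝ) := by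
          rw [Real.div_rpow hr.le (by norm_num), Real.div_rpow ht.le hr.le]
          field_simp
      _ ≤ _ := by gcongr; linarith

/-- The part of the potential over `t ≤ R`, in terms of `∫_0^R t^(e - 1) dt = R^e / e`. -/
lemma lintegral_Ioc_rpow {R e c : ℝ} (hR : 0 < R) (he : 0 < e) (hc : 0 ≤ c) :
    ∫⁻ t in Set.Ioc 0 R, ENNReal.ofReal (c * t ^ (e - 1)) = ENNReal.ofReal (c * (R ^ e / e)) := by
  have hi : IntervalIntegrable (fun t : ℝ => t ^ (e - 1)) volume 0 R :=
    intervalIntegral.intervalIntegrable_rpow' (by linarith)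
  have hi' := (intervalIntegrable_iff_integrableOn_Ioc_of_le hR.le).1 hi
  rw [← ofReal_integral_eq_lintegral_ofReal (hi'.const_mul c)]
  · rw [integral_const_mul, ← intervalIntegral.integral_of_le hR.le,
      integral_rpow (Or.inl (by linarith)), sub_add_cancel, Real.zero_rpow he.ne', sub_zero]
  · filter_upwards [ae_restrict_mem measurableSet_Ioc] with t ht
    have := ht.1
    positivity

/-- The part of the potential over `t > R`, in terms of `∫_R^∞ t^(-e - 1) dt = R^(-e) / e`. -/
lemma lintegral_Ioi_rpow {R e c : ℝ} (hR : 0 < R) (he : 0 < e) (hc : 0 ≤ c) :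
    ∫⁻ t in Set.Ioi R, ENNReal.ofReal (c * t ^ (-e - 1)) =
      ENNReal.ofReal (c * (R ^ (-e) / e)) := by
  have hi := integrableOn_Ioi_rpow_of_lt (show -e - 1 < -1 by linarith) hR
  rw [← ofReal_integral_eq_lintegral_ofReal (hi.const_mul c)]
  · rw [integral_const_mul, integral_Ioi_rpow_of_lt (by linarith) hR, sub_add_cancel, neg_div_neg_eq]
  · filter_upwards [ae_restrict_mem measurableSet_Ioi] with t ht
    have : 0 < t := hR.trans ht
    positivity

/-- Estimate (3.12): decay of the nonlinear Wolff potential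
`W^μ_{s,p}(x;∞) = ∫_0^∞ (μ(B(x,t))/t^{N-sp})^{1/(p-1)} dt/t` with `dμ = |a| dx`. -/
theorem stmt17 (N : ℕ) (hN : 1 ≤ N) (s p : ℝ)
    (hs0 : 0 < s) (hs1 : s < 1) (hp2 : 2 ≤ p) (hpN : p < (N : ℝ) / s)
    (a : EuclideanSpace ℝ (Fin N) → ℝ) (hma : Measurable a)
    (α cₐ : ℝ) (hα : 0 < α) (hca : 0 ≤ cₐ)
    (hHa : ∀ x, |a x| ≤ cₐ / (1 + ‖x‖ ^ ((N : ℝ) + α))) :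
    ∃ C : ℝ, 0 < C ∧ ∀ x : EuclideanSpace ℝ (Fin N), x ≠ 0 →
      (∫⁻ t in Set.Ioi (0 : ℝ),
          ENNReal.ofReal
            ((((∫ y in Metric.ball x t, |a y|) / t ^ ((N : ℝ) - s * p)) ^ (1 / (p - 1))) / t)) ≤
        ENNReal.ofReal (C * ‖x‖ ^ (-((N : ℝ) - s * p) / (p - 1))) := by
  obtain ⟨M, hM, hb⟩ := exists_mass_bound N a hma α cₐ hα hca hHa
  set d : ℝ := (N : ℝ) - s * p with hd_def
  have hd : 0 < d := by
    have := (lt_div_iff₀ hs0).1 hpN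
    rw [hd_def]; linarith [mul_comm p s]
  set q : ℝ := 1 / (p - 1) with hq_def
  have hq : 0 < q := by rw [hq_def]; exact one_div_pos.2 (by linarith)
  have hsp : 0 < s * p := by positivity
  have he : 0 < s * p * q := by positivity
  have hdq : 0 < d * q := by positivity
  set A : ℝ := (1 / 2) ^ (s * p * q) / (s * p * q)
  set B : ℝ := (1 / 2) ^ (-(d * q)) / (d * q)
  have hA : 0 < A := by positivity
  have hB : 0 < B := by positivity
  refine ⟨M ^ q * (A + B), by positivity, fun x hx => ?_⟩
  have hr : 0 < ‖x‖ := norm_pos_iff.2 hx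
  set r := ‖x‖
  have hexp : -d / (p - 1) = -(d * q) := by rw [hq_def]; ring
  rw [hexp, ← Set.Ioc_union_Ioi_eq_Ioi (show (0 : ℝ) ≤ r / 2 by positivity),
    lintegral_union measurableSet_Ioi Set.Ioc_disjoint_Ioi_same]
  have h1 : ∫⁻ t in Set.Ioc 0 (r / 2), ENNReal.ofReal
      ((((∫ y in Metric.ball x t, |a y|) / t ^ d) ^ q) / t) ≤
      ENNReal.ofReal (M ^ q * A * r ^ (-(d * q))) := by
    calc _ ≤ ∫⁻ t in Set.Ioc 0 (r / 2),
          ENNReal.ofReal (M ^ q * r ^ (-(N * q)) * t ^ (s * p * q - 1)) := by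
          refine setLIntegral_mono' measurableSet_Ioc fun t ht => ENNReal.ofReal_le_ofReal ?_
          have ht0 : 0 < t := ht.1
          calc _ ≤ ((M * (t / r) ^ (N : ℝ)) / t ^ d) ^ q / t := by
                gcongr
                exact (hb x hx t ht0).2 ht.2
            _ = ((M * r ^ (-(N : ℝ))) * t ^ (s * p)) ^ q / t := by
                have : t ^ (s * p) = t ^ (N : ℝ) / t ^ d := by
                  rw [← Real.rpow_sub ht0, hd_def]; congr 1; ring
                rw [this, Real.div_rpow ht0.le hr.le, Real.rpow_neg hr.le]
                congr 2
                ring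
            _ = _ := by
                rw [Real.mul_rpow (by positivity) (by positivity),
                  Real.mul_rpow hM.le (by positivity), ← Real.rpow_mul hr.le,
                  ← Real.rpow_mul ht0.le, Real.rpow_sub_one ht0.ne', mul_div_assoc, neg_mul]
      _ = ENNReal.ofReal (M ^ q * A * r ^ (-(d * q))) := by
          rw [lintegral_Ioc_rpow (by positivity) he (by positivity)]
          congr 1
          have : r ^ (-(d * q)) = r ^ (-(N * q)) * r ^ (s * p * q) := by
            rw [← Real.rpow_add hr, hd_def]; congr 1; ring
          rw [this, show r / 2 = (1 / 2) * r by ring, Real.mul_rpow (by norm_num) hr.le]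
          simp only [A]
          ring
  have h2 : ∫⁻ t in Set.Ioi (r / 2), ENNReal.ofReal
      ((((∫ y in Metric.ball x t, |a y|) / t ^ d) ^ q) / t) ≤
      ENNReal.ofReal (M ^ q * B * r ^ (-(d * q))) := by
    calc _ ≤ ∫⁻ t in Set.Ioi (r / 2), ENNReal.ofReal (M ^ q * t ^ (-(d * q) - 1)) := by
          refine setLIntegral_mono' measurableSet_Ioi fun t ht => ENNReal.ofReal_le_ofReal ?_
          have ht0 : 0 < t := lt_trans (by positivity) ht
          calc _ ≤ (M / t ^ d) ^ q / t := by
                gcongr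
                exact (hb x hx t ht0).1
            _ = _ := by
                rw [Real.div_rpow hM.le (by positivity), ← Real.rpow_mul ht0.le,
                  Real.rpow_sub_one ht0.ne', Real.rpow_neg ht0.le]
                ring
      _ = ENNReal.ofReal (M ^ q * B * r ^ (-(d * q))) := by
          rw [lintegral_Ioi_rpow (by positivity) hdq (by positivity)]
          congr 1
          rw [show r / 2 = (1 / 2) * r by ring, Real.mul_rpow (by norm_num) hr.le]
          simp only [B]
          ring
  refine (add_le_add h1 h2).trans (le_of_eq ?_)
  rw [← ENNReal.ofReal_add (by positivity) (by positivity)]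
  congr 1
  ring
end
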